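/- Let M be the 27 × 27 integer matrix obtained by stacking vertically the three Kronecker products r ⊗ I₃ ⊗ I₃, I₃ ⊗ r ⊗ I₃, and I₃ ⊗ I₃ ⊗ r, where I₃ is the 3 × 3 identity matrix and r = (1, 1, 1). Let x_p = (0,0,0,0,54,0,0,0,0,0,54,0,54,2754,0,0,54,54,0,0,0,0,54,54,1,0,0) ∈ ℤ²⁷. Then the set of vectors x ∈ ℤ²⁷ with all coordinates nonnegative satisfying M x = M x_p and x₂₇ = 0 has exactly 2 elements. -/

import Mathlib

/-!
View `x` as a 3 × 3 × 3 table; `M x = M x_p` fixes its 27 line sums. Among those equal to zero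
are the lines `(1,1,*)`, `(1,3,*)` and `(3,1,*)`, so nonnegativity kills these nine entries. With
`x₂₇ = x(3,3,3) = 0` the line `(3,3,*)`, of sum 1, becomes `(a, 1 - a, 0)` with `a ∈ {0, 1}`, and
the remaining line sums determine every other entry from `a`. The case `a = 1` is `x_p` itself,
and `a = 0` is `xq` below.
-/

open Matrix Kronecker

/-- The 1 × 3 all-ones row vector `r = (1, 1, 1)`. -/
def rOnes : Matrix (Fin 1) (Fin 3) ℤ := Matrix.of fun _ _ => 1

/-- Lexicographic identification of index triples `(i₁, i₂, i₃)` with `Fin 27`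
(first coordinate most significant), matching the lexicographic ordering of the triples
`(i₁, i₂, i₃) ∈ {1, 2, 3}³` used to index the 27 coordinates. -/
def colEquiv : (Fin 3 × Fin 3) × Fin 3 ≃ Fin 27 :=
  (Equiv.prodCongr finProdFinEquiv (Equiv.refl (Fin 3))).trans finProdFinEquiv

def rowEquiv1 : (Fin 1 × Fin 3) × Fin 3 ≃ Fin 9 :=
  (Equiv.prodCongr finProdFinEquiv (Equiv.refl (Fin 3))).trans finProdFinEquiv

def rowEquiv2 : (Fin 3 × Fin 1) × Fin 3 ≃ Fin 9 :=
  (Equiv.prodCongr finProdFinEquiv (Equiv.refl (Fin 3))).trans finProdFinEquiv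

def rowEquiv3 : (Fin 3 × Fin 3) × Fin 1 ≃ Fin 9 :=
  (Equiv.prodCongr finProdFinEquiv (Equiv.refl (Fin 1))).trans finProdFinEquiv

/-- The 27 × 27 matrix obtained by stacking vertically the three Kronecker products
`r ⊗ I₃ ⊗ I₃`, `I₃ ⊗ r ⊗ I₃` and `I₃ ⊗ I₃ ⊗ r`, where `I₃` is the 3 × 3 identity matrix and
`r = (1, 1, 1)` is the 1 × 3 all-ones row, with columns indexed lexicographically by triples. -/
def M : Matrix (Fin 27) (Fin 27) ℤ :=
  Matrix.reindex
    ((rowEquiv1.sumCongr (rowEquiv2.sumCongr rowEquiv3)).trans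
      (((Equiv.refl (Fin 9)).sumCongr finSumFinEquiv).trans finSumFinEquiv))
    colEquiv
    (Matrix.fromRows
      (rOnes ⊗ₖ (1 : Matrix (Fin 3) (Fin 3) ℤ) ⊗ₖ (1 : Matrix (Fin 3) (Fin 3) ℤ))
      (Matrix.fromRows
        ((1 : Matrix (Fin 3) (Fin 3) ℤ) ⊗ₖ rOnes ⊗ₖ (1 : Matrix (Fin 3) (Fin 3) ℤ))
        ((1 : Matrix (Fin 3) (Fin 3) ℤ) ⊗ₖ (1 : Matrix (Fin 3) (Fin 3) ℤ) ⊗ₖ rOnes)))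

/-- The particular solution of block 331 (coordinates indexed lexicographically by triples,
coordinate 27 corresponding to (3,3,3)). -/
def xp : Fin 27 → ℤ := ![0,0,0,0,54,0,0,0,0,0,54,0,54,2754,0,0,54,54,0,0,0,0,54,54,1,0,0]

/-- The solution with `x(3,3,1) = 0`. -/
def xq : Fin 27 → ℤ := ![0,0,0,0,54,0,0,0,0,0,54,0,53,2755,0,1,53,54,0,0,0,1,53,54,0,1,0]

/-- The 27 line sums of a vector, viewed as a 3 × 3 × 3 table, in the order of the rows of `M`. -/
def lineSums (x : Fin 27 → ℤ) : Fin 27 → ℤ :=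
  ![x 0 + x 9 + x 18, x 1 + x 10 + x 19, x 2 + x 11 + x 20,
    x 3 + x 12 + x 21, x 4 + x 13 + x 22, x 5 + x 14 + x 23,
    x 6 + x 15 + x 24, x 7 + x 16 + x 25, x 8 + x 17 + x 26,
    x 0 + x 3 + x 6, x 1 + x 4 + x 7, x 2 + x 5 + x 8,
    x 9 + x 12 + x 15, x 10 + x 13 + x 16, x 11 + x 14 + x 17,
    x 18 + x 21 + x 24, x 19 + x 22 + x 25, x 20 + x 23 + x 26,
    x 0 + x 1 + x 2, x 3 + x 4 + x 5, x 6 + x 7 + x 8,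
    x 9 + x 10 + x 11, x 12 + x 13 + x 14, x 15 + x 16 + x 17,
    x 18 + x 19 + x 20, x 21 + x 22 + x 23, x 24 + x 25 + x 26]

/-- The entries of `M`, read off from the line sums of the standard basis vectors. -/
lemma M_eq_of_lineSums : M = Matrix.of fun i j => lineSums (Pi.single j 1) i := by
  decide +kernel

lemma M_mulVec (x : Fin 27 → ℤ) : M.mulVec x = lineSums x := by
  -- Both sides are linear in `x`, so it suffices to compare them on the standard basis.
  have hadd : ∀ u v, lineSums (u + v) = lineSums u + lineSums v := by
    intro u v
    ext i
    fin_cases i <;> simp [lineSums] <;> ring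
  have hsmul : ∀ (c : ℤ) u, lineSums (c • u) = c • lineSums u := by
    intro c u
    ext i
    fin_cases i <;> simp [lineSums] <;> ring
  let L : (Fin 27 → ℤ) →ₗ[ℤ] (Fin 27 → ℤ) :=
    { toFun := lineSums, map_add' := hadd, map_smul' := hsmul }
  have hL : M.mulVecLin = L := by
    refine LinearMap.pi_ext' fun j => LinearMap.ext_ring ?_
    ext i
    simpa [L] using congrFun₂ M_eq_of_lineSums i j
  exact LinearMap.congr_fun hL x

set_option maxHeartbeats 2000000 in
lemma solution_set_eq :
    {x : Fin 27 → ℤ | (∀ i, 0 ≤ x i) ∧ M.mulVec x = M.mulVec xp ∧ x 26 = 0} = {xp, xq} := by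
  ext x
  simp only [Set.mem_ofPred_eq, Set.mem_insert_iff, Set.mem_singleton_iff, M_mulVec]
  constructor
  · rintro ⟨h0, h, h26⟩
    have hs : lineSums xp = ![0,54,0,54,2862,54,1,54,54, 0,54,0,54,2862,54,1,54,54,
        0,54,0,54,2808,108,0,108,1] := by decide +kernel
    rw [hs] at h
    have e := fun i => congrFun h i
    simp only [Fin.forall_fin_succ, lineSums] at e h0
    simp at e h0
    have h24 : x 24 = 1 ∨ x 24 = 0 := by omega
    rcases h24 with h24 | h24
    · left
      ext i
      fin_cases i <;> simp [xp] <;> omega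
    · right
      ext i
      fin_cases i <;> simp [xq] <;> omega
  · rintro (rfl | rfl) <;> decide +kernel

/-- The set of nonnegative integer vectors \`x\` with \`M x = M x_p\` and \`x₂₇ = 0\` (block 331) has exactly 2 elements. -/
theorem block331_solution_count :
    {x : Fin 27 → ℤ | (∀ i, 0 ≤ x i) ∧ M.mulVec x = M.mulVec xp ∧ x 26 = 0}.ncard = 2 := by
  rw [solution_set_eq]
  exact Set.ncard_pair (by decide +kernel)
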